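/- There exists a universal constant C > 0 such that for all integers n1, n2 > 1 with n = n1·n2, all σ > 0, and every θ* ∈ M, the risk of the isotonic least squares estimator satisfies R(θ*, θ̂) ≤ C ( σ²·(log n)⁸ / n + sqrt( σ² V(θ*) / n ) · (log n)⁴ ). -/

import Mathlib

open MeasureTheory ProbabilityTheory

noncomputable section

/-- The set of isotonic (coordinatewise nondecreasing) `n1 × n2` matrices. -/
def Isotonic {n1 n2 : ℕ} (θ : Fin n1 → Fin n2 → ℝ) : Prop :=
  ∀ ⦃i k : Fin n1⦄ ⦃j l : Fin n2⦄, i ≤ k → j ≤ l → θ i j ≤ θ k l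

/-- Squared Frobenius norm of a matrix. -/
def frobSq {n1 n2 : ℕ} (θ : Fin n1 → Fin n2 → ℝ) : ℝ :=
  ∑ i, ∑ j, θ i j ^ 2

/-- The law of an `n1 × n2` matrix with i.i.d. `N(0, σ²)` entries. -/
def noiseMeasure (n1 n2 : ℕ) (σ : ℝ) : Measure (Fin n1 → Fin n2 → ℝ) :=
  Measure.pi fun _ => Measure.pi fun _ => gaussianReal 0 ⟨σ ^ 2, sq_nonneg σ⟩

/-- `lse` is the least squares estimator: for every data matrix `y`, `lse y` minimizes
the squared Frobenius distance to `y` over the cone of isotonic matrices. -/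
def IsLSE {n1 n2 : ℕ} (lse : (Fin n1 → Fin n2 → ℝ) → Fin n1 → Fin n2 → ℝ) : Prop :=
  ∀ y, Isotonic (lse y) ∧ ∀ θ, Isotonic θ → frobSq (y - lse y) ≤ frobSq (y - θ)

/-- The risk `R(θ*, est) = E ‖est(θ* + ε) − θ*‖² / n`, where `ε` has i.i.d. `N(0,σ²)`
entries and `n = n1 n2`. -/
def risk {n1 n2 : ℕ} (σ : ℝ) (θstar : Fin n1 → Fin n2 → ℝ)
    (est : (Fin n1 → Fin n2 → ℝ) → Fin n1 → Fin n2 → ℝ) : ℝ :=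
  (∫ ε, frobSq (est (θstar + ε) - θstar) ∂noiseMeasure n1 n2 σ) / (n1 * n2)

/-- The variance `V(θ) = (1/n) Σ_{i,j} (θ_{ij} − θ̄)²` of the entries of `θ`. -/
def matVar {n1 n2 : ℕ} (θ : Fin n1 → Fin n2 → ℝ) : ℝ :=
  (∑ i, ∑ j, (θ i j - (∑ i, ∑ j, θ i j) / (n1 * n2)) ^ 2) / (n1 * n2)

open Finset in
lemma sum_range_mul_eq (F : ℕ → ℝ) (m k : ℕ) :
    ∑ i ∈ range (m * k), F i = ∑ a ∈ range m, ∑ r ∈ range k, F (a * k + r) := by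
  induction m with
  | zero => simp
  | succ m ih => rw [Nat.succ_mul, sum_range_add, ih, sum_range_succ]

lemma sqrt_two_pow_mul (s t : ℕ) :
    √(((2 ^ s : ℕ) : ℝ) * ((2 ^ t : ℕ) : ℝ)) = √2 ^ (s + t) := by
  push_cast
  rw [← pow_add, Real.sqrt_eq_iff_mul_self_eq (by positivity) (by positivity), ← mul_pow,
    Real.mul_self_sqrt (by norm_num)]

/-- Every rectangle sum of `e` is at most `Z` times the square root of the area. -/
def RectBound (e : ℕ → ℕ → ℝ) (Z : ℝ) : Prop :=
  ∀ a b p q : ℕ, |∑ i ∈ Finset.range p, ∑ j ∈ Finset.range q, e (a + i) (b + j)| ≤ Z * √(p * q)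

lemma RectBound.nonneg {e : ℕ → ℕ → ℝ} {Z : ℝ} (h : RectBound e Z) : 0 ≤ Z := by
  simpa using (abs_nonneg _).trans (h 0 0 1 1)

lemma RectBound.swap {e : ℕ → ℕ → ℝ} {Z : ℝ} (h : RectBound e Z) :
    RectBound (fun i j => e j i) Z := by
  intro a b p q
  rw [Finset.sum_comm, mul_comm (p : ℝ)]
  exact h b a q p

lemma RectBound.shift {e : ℕ → ℕ → ℝ} {Z : ℝ} (h : RectBound e Z) (x y : ℕ) :
    RectBound (fun i j => e (x + i) (y + j)) Z := by
  intro a b p q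
  simpa only [add_assoc] using h (x + a) (y + b) p q

open Finset in
lemma RectBound.abs_sum_mul_le {e : ℕ → ℕ → ℝ} {Z : ℝ} (he : RectBound e Z) (h : ℕ → ℕ → ℝ)
    {s t α β : ℕ} (hs : s ≤ α) (ht : t ≤ β) :
    |∑ i ∈ range (2 ^ α), ∑ j ∈ range (2 ^ β), e i j * h (i / 2 ^ s) (j / 2 ^ t)| ≤
      Z * √2 ^ (s + t) *
        ∑ a ∈ range (2 ^ (α - s)), ∑ b ∈ range (2 ^ (β - t)), |h a b| := by
  have hα : 2 ^ α = 2 ^ (α - s) * 2 ^ s := by rw [← pow_add]; congr 1; omega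
  have hβ : 2 ^ β = 2 ^ (β - t) * 2 ^ t := by rw [← pow_add]; congr 1; omega
  have key : ∑ i ∈ range (2 ^ α), ∑ j ∈ range (2 ^ β), e i j * h (i / 2 ^ s) (j / 2 ^ t) =
      ∑ a ∈ range (2 ^ (α - s)), ∑ b ∈ range (2 ^ (β - t)),
        h a b * ∑ r ∈ range (2 ^ s), ∑ c ∈ range (2 ^ t), e (a * 2 ^ s + r) (b * 2 ^ t + c) := by
    rw [hα, hβ, sum_range_mul_eq]
    refine sum_congr rfl fun a _ => ?_
    simp only [sum_range_mul_eq]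
    rw [sum_comm]
    refine sum_congr rfl fun b _ => ?_
    simp only [mul_sum]
    refine sum_congr rfl fun r hr => sum_congr rfl fun c hc => ?_
    rw [mem_range] at hr hc
    rw [mul_comm a, mul_comm b, Nat.mul_add_div (by positivity), Nat.mul_add_div (by positivity),
      Nat.div_eq_of_lt hr, Nat.div_eq_of_lt hc, add_zero, add_zero, mul_comm]
  rw [key, mul_sum]
  refine (abs_sum_le_sum_abs _ _).trans (sum_le_sum fun a _ => ?_)
  rw [mul_sum]
  refine (abs_sum_le_sum_abs _ _).trans (sum_le_sum fun b _ => ?_)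
  rw [abs_mul, mul_comm]
  refine mul_le_mul_of_nonneg_right ?_ (abs_nonneg _)
  have := he (a * 2 ^ s) (b * 2 ^ t) (2 ^ s) (2 ^ t)
  rwa [sqrt_two_pow_mul] at this

open Finset in
lemma sum_range_pred_sub (h : ℕ → ℝ) (N : ℕ) :
    ∑ a ∈ range (N + 1), (h (a - 1) - h a) = h 0 - h N := by
  induction N with
  | zero => simp
  | succ N ih => rw [sum_range_succ, ih]; simp

open Finset in
/-- The pairing of `e` with the version of `f` frozen on dyadic `2 ^ s × 2 ^ t` blocks. -/
def blockSum (e f : ℕ → ℕ → ℝ) (α β s t : ℕ) : ℝ :=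
  ∑ i ∈ range (2 ^ α), ∑ j ∈ range (2 ^ β), e i j * f (i / 2 ^ s * 2 ^ s) (j / 2 ^ t * 2 ^ t)

lemma blockSum_swap (e f : ℕ → ℕ → ℝ) (α β s t : ℕ) :
    blockSum (fun i j => e j i) (fun i j => f j i) β α t s = blockSum e f α β s t :=
  Finset.sum_comm

/-- Nonnegative functions bounded by `B`, nonincreasing in each coordinate. -/
structure AntiBdd (f : ℕ → ℕ → ℝ) (B : ℝ) : Prop where
  anti : ∀ ⦃i k j l : ℕ⦄, i ≤ k → j ≤ l → f k l ≤ f i j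
  nonneg : ∀ i j, 0 ≤ f i j
  le : ∀ i j, f i j ≤ B

lemma AntiBdd.swap {f : ℕ → ℕ → ℝ} {B : ℝ} (h : AntiBdd f B) : AntiBdd (fun i j => f j i) B :=
  ⟨fun _ _ _ _ hi hj => h.anti hj hi, fun i j => h.nonneg j i, fun i j => h.le j i⟩

open Finset in
lemma abs_blockSum_row_step_le {e f : ℕ → ℕ → ℝ} {Z B : ℝ} (he : RectBound e Z)
    (hf : AntiBdd f B) {α β s t : ℕ} (hs : s + 1 ≤ α) (ht : t ≤ β) (hst : s + β ≤ α + t) :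
    |blockSum e f α β (s + 1) t - blockSum e f α β s t| ≤ Z * B * √2 ^ (α + β) := by
  have hB : 0 ≤ B := (hf.nonneg 0 0).trans (hf.le 0 0)
  set h : ℕ → ℕ → ℝ := fun a b => f (a / 2 * 2 ^ (s + 1)) (b * 2 ^ t) - f (a * 2 ^ s) (b * 2 ^ t)
    with hh
  have hdiff : blockSum e f α β (s + 1) t - blockSum e f α β s t =
      ∑ i ∈ range (2 ^ α), ∑ j ∈ range (2 ^ β), e i j * h (i / 2 ^ s) (j / 2 ^ t) := by
    simp only [blockSum, hh, ← sum_sub_distrib, ← mul_sub, Nat.div_div_eq_div_mul, ← pow_succ]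
  have hsum : ∑ a ∈ range (2 ^ (α - s)), ∑ b ∈ range (2 ^ (β - t)), |h a b| ≤
      2 ^ (β - t) * B := by
    rw [sum_comm]
    have : ∀ b ∈ range (2 ^ (β - t)), ∑ a ∈ range (2 ^ (α - s)), |h a b| ≤ B := by
      intro b _
      obtain ⟨N, hN⟩ : ∃ N, 2 ^ (α - s) = N + 1 := ⟨2 ^ (α - s) - 1, by
        have := Nat.one_le_two_pow (n := α - s); omega⟩
      calc ∑ a ∈ range (2 ^ (α - s)), |h a b|
          ≤ ∑ a ∈ range (2 ^ (α - s)), ((fun x => f (x * 2 ^ s) (b * 2 ^ t)) (a - 1) -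
              (fun x => f (x * 2 ^ s) (b * 2 ^ t)) a) := by
            refine sum_le_sum fun a _ => ?_
            have h1 : a / 2 * 2 ^ (s + 1) = a / 2 * 2 * 2 ^ s := by ring
            simp only [hh, h1]
            rw [abs_of_nonneg]
            · refine sub_le_sub_right (hf.anti (Nat.mul_le_mul_right _ ?_) le_rfl) _
              omega
            · exact sub_nonneg.2 (hf.anti (Nat.mul_le_mul_right _ (by omega)) le_rfl)
        _ ≤ B := by
            rw [hN, sum_range_pred_sub (fun x => f (x * 2 ^ s) (b * 2 ^ t))]
            have := hf.le (0 * 2 ^ s) (b * 2 ^ t)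
            have := hf.nonneg (N * 2 ^ s) (b * 2 ^ t)
            linarith
    calc _ ≤ ∑ b ∈ range (2 ^ (β - t)), B := sum_le_sum this
      _ = _ := by simp
  rw [hdiff]
  refine (he.abs_sum_mul_le h (by omega) ht).trans ?_
  have hpow : √2 ^ (s + t) * (2 : ℝ) ^ (β - t) ≤ √2 ^ (α + β) := by
    have h2 : (2 : ℝ) ^ (β - t) = √2 ^ (2 * (β - t)) := by
      rw [pow_mul, Real.sq_sqrt (by norm_num)]
    rw [h2, ← pow_add]
    exact pow_le_pow_right₀ (Real.one_le_sqrt.2 (by norm_num)) (by omega)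
  calc _ ≤ Z * √2 ^ (s + t) * (2 ^ (β - t) * B) :=
        mul_le_mul_of_nonneg_left hsum (mul_nonneg he.nonneg (by positivity))
    _ = Z * B * (√2 ^ (s + t) * 2 ^ (β - t)) := by ring
    _ ≤ _ := mul_le_mul_of_nonneg_left hpow (mul_nonneg he.nonneg hB)

open Finset in
lemma abs_blockSum_diag_step_le {e f : ℕ → ℕ → ℝ} {Z B : ℝ} (he : RectBound e Z)
    (hf : AntiBdd f B) (α β k : ℕ) :
    |blockSum e f α β (α - k) (β - k) - blockSum e f α β (α - (k + 1)) (β - (k + 1))| ≤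
      2 * (Z * B * √2 ^ (α + β)) := by
  have hB : 0 ≤ B := (hf.nonneg 0 0).trans (hf.le 0 0)
  have h0 : 0 ≤ Z * B * √2 ^ (α + β) := by have := he.nonneg; positivity
  have h1 : |blockSum e f α β (α - k) (β - k) - blockSum e f α β (α - (k + 1)) (β - k)| ≤
      Z * B * √2 ^ (α + β) := by
    rcases lt_or_ge k α with hk | hk
    · have := abs_blockSum_row_step_le he hf (α := α) (β := β) (s := α - (k + 1)) (t := β - k)
        (by omega) (by omega) (by omega)
      rwa [show α - (k + 1) + 1 = α - k by omega] at this
    · rw [show α - k = α - (k + 1) by omega, sub_self, abs_zero]; exact h0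
  have h2 : |blockSum e f α β (α - (k + 1)) (β - k) -
      blockSum e f α β (α - (k + 1)) (β - (k + 1))| ≤ Z * B * √2 ^ (α + β) := by
    rcases lt_or_ge k β with hk | hk
    · have := abs_blockSum_row_step_le he.swap hf.swap (α := β) (β := α) (s := β - (k + 1))
        (t := α - (k + 1)) (by omega) (by omega) (by omega)
      rwa [show β - (k + 1) + 1 = β - k by omega, blockSum_swap e f,
        blockSum_swap e f, add_comm β α] at this
    · rw [show β - k = β - (k + 1) by omega, sub_self, abs_zero]; exact h0
  have := abs_sub_le (blockSum e f α β (α - k) (β - k)) (blockSum e f α β (α - (k + 1)) (β - k))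
    (blockSum e f α β (α - (k + 1)) (β - (k + 1)))
  linarith

open Finset in
/-- Pairing of `e` with a bounded monotone function on a dyadic rectangle. -/
lemma abs_sum_mul_antiBdd_le {e f : ℕ → ℕ → ℝ} {Z B : ℝ} (he : RectBound e Z)
    (hf : AntiBdd f B) (α β : ℕ) :
    |∑ i ∈ range (2 ^ α), ∑ j ∈ range (2 ^ β), e i j * f i j| ≤
      (2 * (α + β) + 1) * (Z * B * √2 ^ (α + β)) := by
  have hind : ∀ k : ℕ, |blockSum e f α β (α - k) (β - k)| ≤
      (2 * k + 1) * (Z * B * √2 ^ (α + β)) := by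
    intro k
    induction k with
    | zero =>
      have h : blockSum e f α β α β =
          f 0 0 * ∑ i ∈ range (2 ^ α), ∑ j ∈ range (2 ^ β), e (0 + i) (0 + j) := by
        simp only [blockSum, mul_sum]
        refine sum_congr rfl fun i hi => sum_congr rfl fun j hj => ?_
        rw [mem_range] at hi hj
        rw [Nat.div_eq_of_lt hi, Nat.div_eq_of_lt hj, zero_mul, zero_mul, zero_add, zero_add,
          mul_comm]
      have hr := he 0 0 (2 ^ α) (2 ^ β)
      rw [sqrt_two_pow_mul] at hr
      simp only [Nat.sub_zero, Nat.cast_zero, mul_zero, zero_add, one_mul]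
      rw [h, abs_mul, abs_of_nonneg (hf.nonneg 0 0)]
      calc _ ≤ B * (Z * √2 ^ (α + β)) :=
            mul_le_mul (hf.le 0 0) hr (abs_nonneg _) ((hf.nonneg 0 0).trans (hf.le 0 0))
        _ = _ := by ring
    | succ k ih =>
      have h1 := abs_blockSum_diag_step_le he hf α β k
      have h2 := abs_sub_abs_le_abs_sub (blockSum e f α β (α - (k + 1)) (β - (k + 1)))
        (blockSum e f α β (α - k) (β - k))
      rw [abs_sub_comm] at h2
      push_cast
      linarith
  have := hind (α + β)
  simpa [blockSum, show α - (α + β) = 0 by omega, show β - (α + β) = 0 by omega] using this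

open Finset in
lemma sum_range_shell (F : ℕ → ℝ) (A : ℕ) :
    ∑ i ∈ range (2 ^ A - 1), F i =
      ∑ a ∈ range A, ∑ i ∈ range (2 ^ a), F ((2 ^ a - 1) + i) := by
  induction A with
  | zero => simp
  | succ A ih =>
    have : 2 ^ (A + 1) - 1 = (2 ^ A - 1) + 2 ^ A := by
      have := Nat.one_le_two_pow (n := A); rw [pow_succ]; omega
    rw [this, sum_range_add, ih, sum_range_succ]

open Finset in
/-- A nonnegative antitone function of mass `S ^ 2` pairs with `e` up to a cubic
polylogarithmic factor. -/
lemma abs_sum_mul_anti_le {e g : ℕ → ℕ → ℝ} {Z S : ℝ} (he : RectBound e Z)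
    (hanti : ∀ ⦃i k j l : ℕ⦄, i ≤ k → j ≤ l → g k l ≤ g i j) (hnonneg : ∀ i j, 0 ≤ g i j)
    (A B : ℕ) (hS0 : 0 ≤ S)
    (hS : ∑ i ∈ range (2 ^ A - 1), ∑ j ∈ range (2 ^ B - 1), g i j ^ 2 ≤ S ^ 2) :
    |∑ i ∈ range (2 ^ A - 1), ∑ j ∈ range (2 ^ B - 1), e i j * g i j| ≤
      A * B * (2 * (A + B) + 1) * (Z * S) := by
  have key : ∀ a ∈ range A, ∀ b ∈ range B,
      |∑ i ∈ range (2 ^ a), ∑ j ∈ range (2 ^ b),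
        e ((2 ^ a - 1) + i) ((2 ^ b - 1) + j) * g ((2 ^ a - 1) + i) ((2 ^ b - 1) + j)| ≤
      (2 * (A + B) + 1) * (Z * S) := by
    intro a ha b hb
    rw [mem_range] at ha hb
    have hr : 0 < √2 ^ (a + b) := by positivity
    have hpt : g (2 ^ a - 1) (2 ^ b - 1) ≤ S / √2 ^ (a + b) := by
      rw [le_div_iff₀ hr]
      refine abs_le_of_sq_le_sq' ?_ hS0 |>.2
      have h1 : (∑ i ∈ range (2 ^ a), ∑ j ∈ range (2 ^ b), g (2 ^ a - 1) (2 ^ b - 1) ^ 2) ≤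
          ∑ i ∈ range (2 ^ A - 1), ∑ j ∈ range (2 ^ B - 1), g i j ^ 2 := by
        have hsub : ∀ {x y : ℕ}, x < y → range (2 ^ x) ⊆ range (2 ^ y - 1) := by
          intro x y hxy
          refine range_subset_range.2 ?_
          have h1 := Nat.pow_le_pow_right (n := 2) (by norm_num) hxy
          have h2 := Nat.one_le_two_pow (n := x)
          rw [Nat.succ_eq_add_one, pow_succ] at h1
          omega
        refine le_trans ?_ (sum_le_sum_of_subset_of_nonneg (hsub ha)
          fun i _ _ => sum_nonneg fun j _ => sq_nonneg _)
        refine sum_le_sum fun i hi => ?_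
        refine le_trans ?_ (sum_le_sum_of_subset_of_nonneg (hsub hb) fun j _ _ => sq_nonneg _)
        refine sum_le_sum fun j hj => ?_
        rw [mem_range] at hi hj
        exact pow_le_pow_left₀ (hnonneg _ _) (hanti (by omega) (by omega)) 2
      have h2 : (g (2 ^ a - 1) (2 ^ b - 1) * √2 ^ (a + b)) ^ 2 =
          ∑ i ∈ range (2 ^ a), ∑ j ∈ range (2 ^ b), g (2 ^ a - 1) (2 ^ b - 1) ^ 2 := by
        have : (√2 ^ (a + b)) ^ 2 = (2 : ℝ) ^ a * 2 ^ b := by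
          rw [← pow_mul, mul_comm, pow_mul, Real.sq_sqrt (by norm_num), pow_add]
        simp only [sum_const, card_range, nsmul_eq_mul, mul_pow, this]
        push_cast
        ring
      rw [h2]
      exact h1.trans hS
    have hbdd : AntiBdd (fun i j => g ((2 ^ a - 1) + i) ((2 ^ b - 1) + j)) (S / √2 ^ (a + b)) :=
      ⟨fun _ _ _ _ hi hj => hanti (by omega) (by omega), fun _ _ => hnonneg _ _,
        fun _ _ => (hanti (by omega) (by omega)).trans hpt⟩
    refine (abs_sum_mul_antiBdd_le (he.shift (2 ^ a - 1) (2 ^ b - 1)) hbdd a b).trans ?_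
    have hZS : 0 ≤ Z * S := mul_nonneg he.nonneg hS0
    have : Z * (S / √2 ^ (a + b)) * √2 ^ (a + b) = Z * S := by field_simp
    rw [this]
    refine mul_le_mul_of_nonneg_right ?_ hZS
    have : (a : ℝ) ≤ A := by exact_mod_cast ha.le
    have : (b : ℝ) ≤ B := by exact_mod_cast hb.le
    linarith
  have hsplit : ∑ i ∈ range (2 ^ A - 1), ∑ j ∈ range (2 ^ B - 1), e i j * g i j =
      ∑ a ∈ range A, ∑ b ∈ range B, ∑ i ∈ range (2 ^ a), ∑ j ∈ range (2 ^ b),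
        e ((2 ^ a - 1) + i) ((2 ^ b - 1) + j) * g ((2 ^ a - 1) + i) ((2 ^ b - 1) + j) := by
    rw [sum_range_shell]
    refine sum_congr rfl fun a _ => ?_
    simp only [sum_range_shell]
    rw [sum_comm]
  rw [hsplit]
  refine (abs_sum_le_sum_abs _ _).trans ?_
  calc _ ≤ ∑ a ∈ range A, ∑ b ∈ range B, (2 * (A + B) + 1) * (Z * S) :=
        sum_le_sum fun a ha => (abs_sum_le_sum_abs _ _).trans (sum_le_sum fun b hb => key a ha b hb)
    _ = _ := by simp only [sum_const, card_range, nsmul_eq_mul]; ring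

/-- Indicator of the interval `[a, a₁)` in `Fin n`. -/
def intervalInd {n : ℕ} (a a₁ : ℕ) (i : Fin n) : ℝ := if a ≤ i ∧ (i : ℕ) < a₁ then 1 else 0

/-- Sum of `ε` over the rectangle `[a, a₁) × [b, b₁)`. -/
def rectSum {n1 n2 : ℕ} (ε : Fin n1 → Fin n2 → ℝ) (a a₁ b b₁ : ℕ) : ℝ :=
  ∑ i, ∑ j, (intervalInd a a₁ i * intervalInd b b₁ j) * ε i j

/-- Area of the rectangle `[a, a₁) × [b, b₁)` inside the `n1 × n2` grid. -/
def rectArea (n1 n2 a a₁ b b₁ : ℕ) : ℝ :=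
  ∑ i : Fin n1, ∑ j : Fin n2, (intervalInd a a₁ i * intervalInd b b₁ j) ^ 2

/-- Finite version of `RectBound` for matrices. -/
def MatRectBound {n1 n2 : ℕ} (ε : Fin n1 → Fin n2 → ℝ) (Z : ℝ) : Prop :=
  ∀ a ≤ n1, ∀ a₁ ≤ n1, ∀ b ≤ n2, ∀ b₁ ≤ n2,
    |rectSum ε a a₁ b b₁| ≤ Z * √(rectArea n1 n2 a a₁ b b₁)

/-- Extension of a matrix by zero. -/
def zeroExt {n1 n2 : ℕ} (x : Fin n1 → Fin n2 → ℝ) (i j : ℕ) : ℝ :=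
  if h : i < n1 ∧ j < n2 then x ⟨i, h.1⟩ ⟨j, h.2⟩ else 0

lemma zeroExt_fin {n1 n2 : ℕ} (x : Fin n1 → Fin n2 → ℝ) (i : Fin n1) (j : Fin n2) :
    zeroExt x i j = x i j := by
  simp [zeroExt]

lemma zeroExt_of_le_left {n1 n2 : ℕ} (x : Fin n1 → Fin n2 → ℝ) {i : ℕ} (hi : n1 ≤ i) (j : ℕ) :
    zeroExt x i j = 0 := by
  rw [zeroExt, dif_neg (by omega)]

lemma zeroExt_of_le_right {n1 n2 : ℕ} (x : Fin n1 → Fin n2 → ℝ) (i : ℕ) {j : ℕ} (hj : n2 ≤ j) :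
    zeroExt x i j = 0 := by
  rw [zeroExt, dif_neg (by omega)]

open Finset in
lemma sum_range_eq_sum_fin {n N : ℕ} (hN : n ≤ N) (F : ℕ → ℝ) (hF : ∀ i, n ≤ i → F i = 0) :
    ∑ i ∈ range N, F i = ∑ i : Fin n, F i := by
  rw [Fin.sum_univ_eq_sum_range]
  refine (sum_subset (range_subset_range.2 hN) fun i _ hi => hF i ?_).symm
  simpa using hi

open Finset in
lemma sum_range_shift_eq_sum_fin {n : ℕ} (a p : ℕ) (F : ℕ → ℝ) (hF : ∀ i, n ≤ i → F i = 0) :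
    ∑ i ∈ range p, F (a + i) =
      ∑ i : Fin n, intervalInd (min a n) (min (a + p) n) i * F i := by
  have h1 : ∑ i ∈ range p, F (a + i) = ∑ i ∈ Ico a (a + p), F i := by
    rw [sum_Ico_eq_sum_range]; simp
  have h2 : ∑ i : Fin n, intervalInd (min a n) (min (a + p) n) i * F i =
      ∑ i ∈ range n, if a ≤ i ∧ i < a + p then F i else 0 := by
    rw [← Fin.sum_univ_eq_sum_range (fun i => if a ≤ i ∧ i < a + p then F i else 0)]
    refine sum_congr rfl fun i _ => ?_
    have hi := i.isLt
    have : (min a n ≤ (i : ℕ) ∧ (i : ℕ) < min (a + p) n) ↔ (a ≤ (i : ℕ) ∧ (i : ℕ) < a + p) := by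
      omega
    simp only [intervalInd, this, ite_mul, one_mul, zero_mul]
  rw [h1, h2, ← sum_filter]
  refine (sum_subset (fun i hi => ?_) fun i hi hn => hF i ?_).symm
  · simp only [mem_filter, mem_range] at hi
    exact mem_Ico.2 hi.2
  · simp only [mem_filter, mem_range, mem_Ico] at hi hn
    omega

open Finset in
lemma sum_intervalInd_sq_le (n a p : ℕ) :
    ∑ i : Fin n, intervalInd (min a n) (min (a + p) n) i ^ 2 ≤ p := by
  have h := sum_range_shift_eq_sum_fin (n := n) a p (fun i => if i < n then 1 else 0)
    (fun i hi => if_neg (by omega))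
  have h2 : ∑ i : Fin n, intervalInd (min a n) (min (a + p) n) i ^ 2 =
      ∑ i ∈ range p, if a + i < n then (1 : ℝ) else 0 := by
    rw [h]
    refine sum_congr rfl fun i _ => ?_
    rw [if_pos i.isLt, intervalInd]
    split_ifs <;> simp
  rw [h2]
  calc _ ≤ ∑ i ∈ range p, (1 : ℝ) := sum_le_sum fun i _ => by split_ifs <;> norm_num
    _ = p := by simp

lemma MatRectBound.rectBound {n1 n2 : ℕ} {ε : Fin n1 → Fin n2 → ℝ} {Z : ℝ} (hZ : 0 ≤ Z)
    (h : MatRectBound ε Z) : RectBound (zeroExt ε) Z := by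
  intro a b p q
  have h1 : ∑ i ∈ Finset.range p, ∑ j ∈ Finset.range q, zeroExt ε (a + i) (b + j) =
      rectSum ε (min a n1) (min (a + p) n1) (min b n2) (min (b + q) n2) := by
    rw [sum_range_shift_eq_sum_fin (n := n1) a p
      (fun i => ∑ j ∈ Finset.range q, zeroExt ε i (b + j))
      fun i hi => Finset.sum_eq_zero fun j _ => zeroExt_of_le_left ε hi _]
    refine Finset.sum_congr rfl fun i _ => ?_
    rw [sum_range_shift_eq_sum_fin (n := n2) b q (fun j => zeroExt ε i j)
      fun j hj => zeroExt_of_le_right ε _ hj, Finset.mul_sum]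
    refine Finset.sum_congr rfl fun j _ => ?_
    rw [zeroExt_fin, mul_assoc]
  have h2 : rectArea n1 n2 (min a n1) (min (a + p) n1) (min b n2) (min (b + q) n2) ≤ p * q := by
    simp only [rectArea, mul_pow, ← Finset.mul_sum, ← Finset.sum_mul]
    exact mul_le_mul (sum_intervalInd_sq_le n1 a p) (sum_intervalInd_sq_le n2 b q)
      (Finset.sum_nonneg fun _ _ => sq_nonneg _) (Nat.cast_nonneg _)
  rw [h1]
  exact (h _ (min_le_right _ _) _ (min_le_right _ _) _ (min_le_right _ _) _
    (min_le_right _ _)).trans (mul_le_mul_of_nonneg_left (Real.sqrt_le_sqrt h2) hZ)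

lemma intervalInd_rev {n a a₁ : ℕ} (ha : a ≤ n) (ha₁ : a₁ ≤ n) (i : Fin n) :
    intervalInd a a₁ i.rev = intervalInd (n - a₁) (n - a) i := by
  have := i.isLt
  simp only [intervalInd, Fin.val_rev]
  congr 1
  apply propext
  omega

lemma sum_rev_rev {n1 n2 : ℕ} (F : Fin n1 → Fin n2 → ℝ) :
    ∑ i : Fin n1, ∑ j : Fin n2, F i.rev j.rev = ∑ i, ∑ j, F i j := by
  rw [← Equiv.sum_comp Fin.revPerm fun i => ∑ j, F i j]
  refine Finset.sum_congr rfl fun i _ => ?_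
  rw [← Equiv.sum_comp Fin.revPerm (F (Fin.revPerm i))]
  rfl

lemma MatRectBound.rev {n1 n2 : ℕ} {ε : Fin n1 → Fin n2 → ℝ} {Z : ℝ} (h : MatRectBound ε Z) :
    MatRectBound (fun i j => ε i.rev j.rev) Z := by
  intro a ha a₁ ha₁ b hb b₁ hb₁
  have := h (n1 - a₁) (Nat.sub_le _ _) (n1 - a) (Nat.sub_le _ _) (n2 - b₁) (Nat.sub_le _ _)
    (n2 - b) (Nat.sub_le _ _)
  simp only [rectSum, rectArea] at this ⊢
  rw [← sum_rev_rev, ← sum_rev_rev fun i j => (intervalInd a a₁ i * intervalInd b b₁ j) ^ 2]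
  simpa only [intervalInd_rev ha ha₁, intervalInd_rev hb hb₁, Fin.rev_rev] using this

lemma sum_zeroExt {n1 n2 N1 N2 : ℕ} (h1 : n1 ≤ N1) (h2 : n2 ≤ N2) (F : ℕ → ℕ → ℝ)
    (hF1 : ∀ i j, n1 ≤ i → F i j = 0) (hF2 : ∀ i j, n2 ≤ j → F i j = 0) :
    ∑ i ∈ Finset.range N1, ∑ j ∈ Finset.range N2, F i j =
      ∑ i : Fin n1, ∑ j : Fin n2, F i j := by
  rw [sum_range_eq_sum_fin h1 _ fun i hi => Finset.sum_eq_zero fun j _ => hF1 i j hi]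
  exact Finset.sum_congr rfl fun i _ => sum_range_eq_sum_fin h2 _ fun j hj => hF2 _ j hj

/-- The polylogarithmic factor in the deterministic bounds. -/
def logFactor (n1 n2 : ℕ) : ℝ :=
  n1.size * n2.size * (2 * (n1.size + n2.size) + 1)

lemma logFactor_nonneg (n1 n2 : ℕ) : 0 ≤ logFactor n1 n2 := by
  unfold logFactor; positivity

lemma frobSq_nonneg {n1 n2 : ℕ} (x : Fin n1 → Fin n2 → ℝ) : 0 ≤ frobSq x :=
  Finset.sum_nonneg fun _ _ => Finset.sum_nonneg fun _ _ => sq_nonneg _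

lemma abs_sum_mul_antitone_le {n1 n2 : ℕ} {ε g : Fin n1 → Fin n2 → ℝ} {Z : ℝ} (hZ : 0 ≤ Z)
    (h : MatRectBound ε Z) (hg : ∀ ⦃i k : Fin n1⦄ ⦃j l : Fin n2⦄, i ≤ k → j ≤ l → g k l ≤ g i j)
    (hg0 : ∀ i j, 0 ≤ g i j) :
    |∑ i, ∑ j, ε i j * g i j| ≤ logFactor n1 n2 * (Z * √(frobSq g)) := by
  have hN : ∀ n : ℕ, n ≤ 2 ^ n.size - 1 := fun n => Nat.le_sub_one_of_lt n.lt_size_self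
  have h0 : ∀ i j, 0 ≤ zeroExt g i j := by
    intro i j
    unfold zeroExt
    split_ifs with hij
    exacts [hg0 _ _, le_rfl]
  have hanti : ∀ ⦃i k j l : ℕ⦄, i ≤ k → j ≤ l → zeroExt g k l ≤ zeroExt g i j := by
    intro i k j l hik hjl
    by_cases hkl : k < n1 ∧ l < n2
    · rw [zeroExt, dif_pos hkl, zeroExt, dif_pos ⟨by omega, by omega⟩]
      exact hg hik hjl
    · rw [zeroExt, dif_neg hkl]
      exact h0 i j
  have hS := sum_zeroExt (hN n1) (hN n2) (fun i j => zeroExt g i j ^ 2)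
    (fun i j hi => by simp [zeroExt_of_le_left g hi])
    (fun i j hj => by simp [zeroExt_of_le_right g i hj])
  have hP := sum_zeroExt (hN n1) (hN n2) (fun i j => zeroExt ε i j * zeroExt g i j)
    (fun i j hi => by simp [zeroExt_of_le_left g hi])
    (fun i j hj => by simp [zeroExt_of_le_right g i hj])
  simp only [zeroExt_fin] at hS hP
  rw [← hP]
  refine abs_sum_mul_anti_le (h.rectBound hZ) hanti h0 n1.size n2.size (Real.sqrt_nonneg _) ?_
  rw [hS, Real.sq_sqrt (frobSq_nonneg g)]
  rfl

/-- Deterministic control of the pairing of noise with an isotonic matrix. -/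
lemma abs_sum_mul_isotonic_le {n1 n2 : ℕ} {ε u : Fin n1 → Fin n2 → ℝ} {Z : ℝ} (hZ : 0 ≤ Z)
    (h : MatRectBound ε Z) (hu : Isotonic u) :
    |∑ i, ∑ j, ε i j * u i j| ≤ 2 * logFactor n1 n2 * (Z * √(frobSq u)) := by
  have hneg := abs_sum_mul_antitone_le hZ h (g := fun i j => max (-u i j) 0)
    (fun i k j l hi hj => max_le_max_right 0 (neg_le_neg (hu hi hj))) fun _ _ => le_max_right _ _
  have hpos := abs_sum_mul_antitone_le hZ h.rev (g := fun i j => max (u i.rev j.rev) 0)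
    (fun i k j l hi hj => max_le_max_right 0 (hu (Fin.rev_le_rev.2 hi) (Fin.rev_le_rev.2 hj)))
    fun _ _ => le_max_right _ _
  have hpart : ∀ x : ℝ, max x 0 ^ 2 ≤ x ^ 2 := by
    intro x
    rcases le_total x 0 with hx | hx
    · rw [max_eq_right hx]; nlinarith
    · rw [max_eq_left hx]
  have hnegS : frobSq (fun i j => max (-u i j) 0) ≤ frobSq u :=
    Finset.sum_le_sum fun i _ => Finset.sum_le_sum fun j _ => (hpart _).trans_eq (neg_sq _)
  have hposS : frobSq (fun i j => max (u i.rev j.rev) 0) ≤ frobSq u := by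
    unfold frobSq
    rw [sum_rev_rev fun i j => max (u i j) 0 ^ 2]
    exact Finset.sum_le_sum fun i _ => Finset.sum_le_sum fun j _ => hpart _
  rw [sum_rev_rev fun i j => ε i j * max (u i j) 0] at hpos
  have hsplit : ∑ i, ∑ j, ε i j * u i j =
      ∑ i, ∑ j, ε i j * max (u i j) 0 - ∑ i, ∑ j, ε i j * max (-u i j) 0 := by
    simp only [← Finset.sum_sub_distrib, ← mul_sub]
    refine Finset.sum_congr rfl fun i _ => Finset.sum_congr rfl fun j _ => ?_
    congr 1
    rcases le_total (u i j) 0 with hx | hx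
    · rw [max_eq_right hx, max_eq_left (by linarith)]; ring
    · rw [max_eq_left hx, max_eq_right (by linarith)]; ring
  have mono : ∀ {x : ℝ}, x ≤ frobSq u →
      logFactor n1 n2 * (Z * √x) ≤ logFactor n1 n2 * (Z * √(frobSq u)) := fun hx =>
    mul_le_mul_of_nonneg_left (mul_le_mul_of_nonneg_left (Real.sqrt_le_sqrt hx) hZ)
      (logFactor_nonneg _ _)
  rw [hsplit]
  have := abs_sub (∑ i, ∑ j, ε i j * max (u i j) 0) (∑ i, ∑ j, ε i j * max (-u i j) 0)
  linarith [mono hnegS, mono hposS]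

open scoped NNReal in
lemma map_pi_sum_eq_gaussianReal {ι : Type*} [Fintype ι] {Ω : ι → Type*}
    [∀ i, MeasurableSpace (Ω i)] (μ : ∀ i, Measure (Ω i)) [∀ i, IsProbabilityMeasure (μ i)]
    (f : ∀ i, Ω i → ℝ) (hf : ∀ i, Measurable (f i)) (v : ι → ℝ≥0)
    (h : ∀ i, (μ i).map (f i) = gaussianReal 0 (v i)) :
    (Measure.pi μ).map (fun ω => ∑ i, f i (ω i)) = gaussianReal 0 (∑ i, v i) := by
  classical
  have hmeas : ∀ i, Measurable fun ω : ∀ i, Ω i => f i (ω i) := fun i =>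
    (hf i).comp (measurable_pi_apply i)
  have hind : iIndepFun (fun i (ω : ∀ i, Ω i) => f i (ω i)) (Measure.pi μ) :=
    iIndepFun_pi fun i => (hf i).aemeasurable
  have hmarg : ∀ i, (Measure.pi μ).map (fun ω => f i (ω i)) = gaussianReal 0 (v i) := by
    intro i
    rw [← h i, ← (measurePreserving_eval μ i).map_eq,
      Measure.map_map (hf i) (measurable_pi_apply i)]
    rfl
  have key : ∀ s : Finset ι, (Measure.pi μ).map (∑ i ∈ s, fun ω => f i (ω i)) =
      gaussianReal 0 (∑ i ∈ s, v i) := by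
    intro s
    induction s using Finset.induction_on with
    | empty =>
      rw [Finset.sum_empty, Finset.sum_empty, gaussianReal_zero_var]
      have := Measure.map_const (Measure.pi μ) (0 : ℝ)
      rwa [measure_univ, one_smul] at this
    | insert i s hi ih =>
      rw [Finset.sum_insert hi, Finset.sum_insert hi, add_comm, add_comm (v i)]
      simpa using gaussianReal_add_gaussianReal_of_indepFun
        (hind.indepFun_finsetSum_of_notMem hmeas hi) ih (hmarg i)
  rw [← key Finset.univ]
  congr 1
  ext ω
  simp

open scoped NNReal in
lemma integrable_exp_sq_gaussianReal (v : ℝ≥0) :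
    Integrable (fun x : ℝ => Real.exp (x ^ 2 / (4 * v))) (gaussianReal 0 v) ∧
      ∫ x, Real.exp (x ^ 2 / (4 * v)) ∂gaussianReal 0 v ≤ 2 := by
  by_cases hv : v = 0
  · subst hv
    simp
  have hv0 : (0 : ℝ) < v := NNReal.coe_pos.2 (pos_iff_ne_zero.2 hv)
  have hprod : ∀ x : ℝ, gaussianPDFReal 0 v x * Real.exp (x ^ 2 / (4 * v)) =
      (√(2 * Real.pi * v))⁻¹ * Real.exp (-(1 / (4 * v)) * x ^ 2) := by
    intro x
    rw [gaussianPDFReal, mul_assoc, ← Real.exp_add]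
    congr 2
    field_simp
    ring
  constructor
  · rw [gaussianReal_of_var_ne_zero 0 hv,
      integrable_withDensity_iff_integrable_smul' (measurable_gaussianPDF 0 v)
        (Filter.Eventually.of_forall fun _ => gaussianPDF_lt_top)]
    simp only [toReal_gaussianPDF, smul_eq_mul, hprod]
    exact (integrable_exp_neg_mul_sq (by positivity)).const_mul _
  · rw [integral_gaussianReal_eq_integral_smul hv]
    simp only [smul_eq_mul, hprod]
    rw [integral_const_mul, integral_gaussian, ← Real.sqrt_inv, ← Real.sqrt_mul (by positivity)]
    refine Real.sqrt_le_iff.2 ⟨by norm_num, ?_⟩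
    have : (2 * Real.pi * (v : ℝ))⁻¹ * (Real.pi / (1 / (4 * v))) = 2 := by
      field_simp
      norm_num
    rw [this]
    norm_num

lemma noiseMeasure_eq (n1 n2 : ℕ) (σ : ℝ) : noiseMeasure n1 n2 σ =
    Measure.pi fun _ => Measure.pi fun _ => gaussianReal 0 (NNReal.mk (σ ^ 2) (sq_nonneg σ)) :=
  rfl

instance isProbabilityMeasure_noiseMeasure (n1 n2 : ℕ) (σ : ℝ) :
    IsProbabilityMeasure (noiseMeasure n1 n2 σ) := by
  rw [noiseMeasure_eq]; infer_instance

lemma integrable_exp_sq_noise (n1 n2 : ℕ) (σ : ℝ) (w : Fin n1 → Fin n2 → ℝ) :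
    Integrable (fun ε => Real.exp ((∑ i, ∑ j, w i j * ε i j) ^ 2 /
      (4 * (σ ^ 2 * ∑ i, ∑ j, w i j ^ 2)))) (noiseMeasure n1 n2 σ) ∧
    ∫ ε, Real.exp ((∑ i, ∑ j, w i j * ε i j) ^ 2 /
      (4 * (σ ^ 2 * ∑ i, ∑ j, w i j ^ 2))) ∂noiseMeasure n1 n2 σ ≤ 2 := by
  have hlaw := map_pi_sum_eq_gaussianReal
    (fun _ : Fin n1 => Measure.pi fun _ : Fin n2 => gaussianReal 0 (NNReal.mk (σ ^ 2) (sq_nonneg σ)))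
    (fun i x => ∑ j, w i j * x j) (fun i => by fun_prop) _ fun i =>
      map_pi_sum_eq_gaussianReal (fun _ : Fin n2 => gaussianReal 0 (NNReal.mk (σ ^ 2) (sq_nonneg σ)))
        (fun j x => w i j * x) (fun j => by fun_prop) _ fun j => by
          rw [gaussianReal_map_const_mul, mul_zero]
  rw [← noiseMeasure_eq] at hlaw
  have hv : ((∑ i, ∑ j, (NNReal.mk (w i j ^ 2) (sq_nonneg _) * NNReal.mk (σ ^ 2) (sq_nonneg σ)) : NNReal)
      : ℝ) = σ ^ 2 * ∑ i, ∑ j, w i j ^ 2 := by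
    push_cast
    simp only [Finset.mul_sum]
    refine Finset.sum_congr rfl fun i _ => Finset.sum_congr rfl fun j _ => mul_comm _ _
  have hX : Measurable fun ε : Fin n1 → Fin n2 → ℝ => ∑ i, ∑ j, w i j * ε i j := by fun_prop
  have hE := integrable_exp_sq_gaussianReal
    (∑ i, ∑ j, (NNReal.mk (w i j ^ 2) (sq_nonneg _) * NNReal.mk (σ ^ 2) (sq_nonneg σ)))
  rw [hv, ← hlaw] at hE
  have hm : AEStronglyMeasurable
      (fun x : ℝ => Real.exp (x ^ 2 / (4 * (σ ^ 2 * ∑ i, ∑ j, w i j ^ 2))))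
      ((noiseMeasure n1 n2 σ).map fun ε => ∑ i, ∑ j, w i j * ε i j) := by
    fun_prop
  rw [integral_map hX.aemeasurable hm, integrable_map_measure hm hX.aemeasurable] at hE
  exact hE

/-- Number of quadruples of endpoints describing rectangles in the `n1 × n2` grid. -/
def rectCount (n1 n2 : ℕ) : ℝ := ((n1 : ℝ) + 1) ^ 2 * ((n2 : ℝ) + 1) ^ 2

/-- Exponential moment of a normalized rectangle sum of the noise. -/
def rectExp {n1 n2 : ℕ} (σ : ℝ) (ε : Fin n1 → Fin n2 → ℝ) (a a₁ b b₁ : ℕ) : ℝ :=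
  Real.exp (rectSum ε a a₁ b b₁ ^ 2 / (4 * (σ ^ 2 * rectArea n1 n2 a a₁ b b₁)))

open Finset in
/-- Smooth upper bound for the largest squared normalized rectangle sum of the noise. -/
def noiseMax {n1 n2 : ℕ} (σ : ℝ) (ε : Fin n1 → Fin n2 → ℝ) : ℝ :=
  4 * σ ^ 2 * (Real.log (rectCount n1 n2) + (rectCount n1 n2)⁻¹ *
    ∑ a ∈ range (n1 + 1), ∑ a₁ ∈ range (n1 + 1), ∑ b ∈ range (n2 + 1), ∑ b₁ ∈ range (n2 + 1),
      rectExp σ ε a a₁ b b₁)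

lemma one_le_rectCount (n1 n2 : ℕ) : 1 ≤ rectCount n1 n2 :=
  one_le_mul_of_one_le_of_one_le (one_le_pow₀ (by simp)) (one_le_pow₀ (by simp))

lemma noiseMax_nonneg {n1 n2 : ℕ} (σ : ℝ) (ε : Fin n1 → Fin n2 → ℝ) : 0 ≤ noiseMax σ ε := by
  have h1 := one_le_rectCount n1 n2
  have h2 := Real.log_nonneg h1
  have h3 : 0 ≤ (rectCount n1 n2)⁻¹ := inv_nonneg.2 (by linarith)
  unfold noiseMax rectExp
  positivity

open Finset in
lemma matRectBound_sqrt_noiseMax {n1 n2 : ℕ} {σ : ℝ} (hσ : 0 < σ) (ε : Fin n1 → Fin n2 → ℝ) :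
    MatRectBound ε √(noiseMax σ ε) := by
  intro a ha a₁ ha₁ b hb b₁ hb₁
  have hA : 0 ≤ rectArea n1 n2 a a₁ b b₁ :=
    sum_nonneg fun _ _ => sum_nonneg fun _ _ => sq_nonneg _
  rw [← Real.sqrt_mul (noiseMax_nonneg σ ε)]
  refine Real.abs_le_sqrt ?_
  rcases hA.eq_or_lt with h0 | hpos
  · have hw : ∀ i j, intervalInd (n := n1) a a₁ i * intervalInd (n := n2) b b₁ j = 0 := by
      intro i j
      have h1 := (sum_eq_zero_iff_of_nonneg
        fun i _ => sum_nonneg fun j _ => sq_nonneg _).1 h0.symm i (mem_univ i)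
      have h2 := (sum_eq_zero_iff_of_nonneg fun j _ => sq_nonneg _).1 h1 j (mem_univ j)
      simpa using h2
    have : rectSum ε a a₁ b b₁ = 0 := by simp [rectSum, hw]
    rw [this, ← h0]
    simp
  · have hN := one_le_rectCount n1 n2
    have hN0 : 0 < rectCount n1 n2 := by linarith
    set x := rectSum ε a a₁ b b₁ ^ 2 / (4 * (σ ^ 2 * rectArea n1 n2 a a₁ b b₁)) with hx
    have h1 : x ≤ Real.log (rectCount n1 n2) + (rectCount n1 n2)⁻¹ * Real.exp x := by
      have := Real.add_one_le_exp (x - Real.log (rectCount n1 n2))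
      rw [Real.exp_sub, Real.exp_log hN0, div_eq_inv_mul] at this
      linarith
    have hmem : ∀ {c n : ℕ}, c ≤ n → c ∈ range (n + 1) := fun h => mem_range.2 (by omega)
    have hnn : ∀ c c₁ d d₁, 0 ≤ rectExp σ ε c c₁ d d₁ := fun _ _ _ _ => (Real.exp_pos _).le
    have h2 : Real.exp x ≤ ∑ a ∈ range (n1 + 1), ∑ a₁ ∈ range (n1 + 1), ∑ b ∈ range (n2 + 1),
        ∑ b₁ ∈ range (n2 + 1), rectExp σ ε a a₁ b b₁ := by
      change rectExp σ ε a a₁ b b₁ ≤ _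
      refine le_trans ?_ (single_le_sum (fun c _ => sum_nonneg fun c₁ _ => sum_nonneg fun d _ =>
        sum_nonneg fun d₁ _ => hnn c c₁ d d₁) (hmem ha))
      refine le_trans ?_ (single_le_sum (fun c₁ _ => sum_nonneg fun d _ =>
        sum_nonneg fun d₁ _ => hnn a c₁ d d₁) (hmem ha₁))
      refine le_trans ?_ (single_le_sum (fun d _ =>
        sum_nonneg fun d₁ _ => hnn a a₁ d d₁) (hmem hb))
      exact single_le_sum (fun d₁ _ => hnn a a₁ b d₁) (hmem hb₁)
    have h3 : rectSum ε a a₁ b b₁ ^ 2 = 4 * σ ^ 2 * x * rectArea n1 n2 a a₁ b b₁ := by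
      rw [hx]; field_simp
    rw [h3]
    refine mul_le_mul_of_nonneg_right ?_ hA
    refine mul_le_mul_of_nonneg_left (h1.trans ?_) (by positivity)
    gcongr

lemma integrable_rectExp (n1 n2 : ℕ) (σ : ℝ) (a a₁ b b₁ : ℕ) :
    Integrable (fun ε => rectExp σ ε a a₁ b b₁) (noiseMeasure n1 n2 σ) ∧
      ∫ ε, rectExp σ ε a a₁ b b₁ ∂noiseMeasure n1 n2 σ ≤ 2 :=
  integrable_exp_sq_noise n1 n2 σ fun i j => intervalInd a a₁ i * intervalInd b b₁ j

open Finset in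
lemma integrable_noiseMax (n1 n2 : ℕ) (σ : ℝ) :
    Integrable (fun ε => noiseMax σ ε) (noiseMeasure n1 n2 σ) ∧
      ∫ ε, noiseMax σ ε ∂noiseMeasure n1 n2 σ ≤
        4 * σ ^ 2 * (Real.log (rectCount n1 n2) + 2) := by
  have hN := one_le_rectCount n1 n2
  have hN0 : 0 < rectCount n1 n2 := by linarith
  have hI := fun a a₁ b b₁ => (integrable_rectExp n1 n2 σ a a₁ b b₁).1
  have hI1 := fun a a₁ b => integrable_finsetSum (range (n2 + 1)) fun b₁ _ => hI a a₁ b b₁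
  have hI2 := fun a a₁ => integrable_finsetSum (range (n2 + 1)) fun b _ => hI1 a a₁ b
  have hI3 := fun a => integrable_finsetSum (range (n1 + 1)) fun a₁ _ => hI2 a a₁
  have hI4 := integrable_finsetSum (range (n1 + 1)) fun a _ => hI3 a
  refine ⟨((integrable_const _).add (hI4.const_mul _)).const_mul _, ?_⟩
  have hsum : ∫ ε, ∑ a ∈ range (n1 + 1), ∑ a₁ ∈ range (n1 + 1), ∑ b ∈ range (n2 + 1),
      ∑ b₁ ∈ range (n2 + 1), rectExp σ ε a a₁ b b₁ ∂noiseMeasure n1 n2 σ ≤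
      rectCount n1 n2 * 2 := by
    rw [integral_finsetSum _ fun a _ => hI3 a]
    simp_rw [integral_finsetSum _ fun a₁ _ => hI2 _ a₁,
      integral_finsetSum _ fun b _ => hI1 _ _ b,
      integral_finsetSum _ fun b₁ _ => hI _ _ _ b₁]
    calc _ ≤ ∑ a ∈ range (n1 + 1), ∑ a₁ ∈ range (n1 + 1), ∑ b ∈ range (n2 + 1),
          ∑ b₁ ∈ range (n2 + 1), (2 : ℝ) :=
          sum_le_sum fun a _ => sum_le_sum fun a₁ _ => sum_le_sum fun b _ => sum_le_sum fun b₁ _ =>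
            (integrable_rectExp n1 n2 σ a a₁ b b₁).2
      _ = _ := by
          simp only [sum_const, card_range, nsmul_eq_mul, rectCount]
          push_cast
          ring
  unfold noiseMax
  rw [integral_const_mul, integral_add (integrable_const _) (hI4.const_mul _), integral_const_mul,
    integral_const, probReal_univ, one_smul]
  refine mul_le_mul_of_nonneg_left (add_le_add_right ?_ _) (by positivity)
  rw [inv_mul_le_iff₀ hN0]
  exact hsum

lemma Isotonic.sub_const {n1 n2 : ℕ} {θ : Fin n1 → Fin n2 → ℝ} (h : Isotonic θ) (c : ℝ) :
    Isotonic fun i j => θ i j - c :=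
  fun _ _ _ _ hi hj => sub_le_sub_right (h hi hj) c

lemma sqrt_frobSq_le {n1 n2 : ℕ} {u v d : Fin n1 → Fin n2 → ℝ} (h : ∀ i j, u i j = d i j + v i j) :
    √(frobSq u) ≤ 2 * √(frobSq d) + 2 * √(frobSq v) := by
  have hle : frobSq u ≤ 2 * frobSq d + 2 * frobSq v := by
    simp only [frobSq, Finset.mul_sum, ← Finset.sum_add_distrib]
    refine Finset.sum_le_sum fun i _ => Finset.sum_le_sum fun j _ => ?_
    rw [h]
    nlinarith [sq_nonneg (d i j - v i j)]
  have hd := frobSq_nonneg d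
  have hv := frobSq_nonneg v
  have hd2 := Real.sq_sqrt hd
  have hv2 := Real.sq_sqrt hv
  have hd3 := Real.sqrt_nonneg (frobSq d)
  have hv3 := Real.sqrt_nonneg (frobSq v)
  refine Real.sqrt_le_iff.2 ⟨by positivity, hle.trans ?_⟩
  nlinarith [mul_nonneg hd3 hv3]

lemma IsLSE.frobSq_le {n1 n2 : ℕ} {lse : (Fin n1 → Fin n2 → ℝ) → Fin n1 → Fin n2 → ℝ}
    (hlse : IsLSE lse) {θ : Fin n1 → Fin n2 → ℝ} (hθ : Isotonic θ) (ε : Fin n1 → Fin n2 → ℝ)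
    (c : ℝ) :
    frobSq (lse (θ + ε) - θ) ≤ 2 * ∑ i, ∑ j, ε i j * (lse (θ + ε) i j - c) -
      2 * ∑ i, ∑ j, ε i j * (θ i j - c) := by
  have h := (hlse (θ + ε)).2 θ hθ
  have hid : frobSq (θ + ε - lse (θ + ε)) - frobSq (θ + ε - θ) =
      frobSq (lse (θ + ε) - θ) - (2 * ∑ i, ∑ j, ε i j * (lse (θ + ε) i j - c) -
      2 * ∑ i, ∑ j, ε i j * (θ i j - c)) := by
    simp only [frobSq, Finset.mul_sum, ← Finset.sum_sub_distrib, Pi.sub_apply, Pi.add_apply]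
    refine Finset.sum_congr rfl fun i _ => Finset.sum_congr rfl fun j _ => ?_
    ring
  linarith

/-- Pointwise loss bound in terms of the maximal normalized rectangle sum. -/
lemma IsLSE.frobSq_le_noiseMax {n1 n2 : ℕ}
    {lse : (Fin n1 → Fin n2 → ℝ) → Fin n1 → Fin n2 → ℝ} (hlse : IsLSE lse)
    {θ : Fin n1 → Fin n2 → ℝ} (hθ : Isotonic θ) {σ : ℝ} (hσ : 0 < σ) (c : ℝ) {t : ℝ} (ht : 0 < t)
    (ε : Fin n1 → Fin n2 → ℝ) :
    frobSq (lse (θ + ε) - θ) ≤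
      (16 * (2 * logFactor n1 n2) ^ 2 +
        6 * (2 * logFactor n1 n2) * √(frobSq fun i j => θ i j - c) / t) * noiseMax σ ε +
      6 * (2 * logFactor n1 n2) * √(frobSq fun i j => θ i j - c) * t := by
  set K := 2 * logFactor n1 n2
  set V := √(frobSq fun i j => θ i j - c)
  set D := √(frobSq (lse (θ + ε) - θ))
  set Z := √(noiseMax σ ε)
  have hK0 : 0 ≤ K := mul_nonneg (by norm_num) (logFactor_nonneg _ _)
  have hV0 : 0 ≤ V := Real.sqrt_nonneg _
  have hZ0 : 0 ≤ Z := Real.sqrt_nonneg _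
  have hD2 : D ^ 2 = frobSq (lse (θ + ε) - θ) := Real.sq_sqrt (frobSq_nonneg _)
  have hZ2 : Z ^ 2 = noiseMax σ ε := Real.sq_sqrt (noiseMax_nonneg _ _)
  have hrect := matRectBound_sqrt_noiseMax hσ ε
  have h1 := abs_sum_mul_isotonic_le hZ0 hrect ((hlse (θ + ε)).1.sub_const c)
  have h2 := abs_sum_mul_isotonic_le hZ0 hrect (hθ.sub_const c)
  have h3 := sqrt_frobSq_le (u := fun i j => lse (θ + ε) i j - c)
    (v := fun i j => θ i j - c) (d := lse (θ + ε) - θ) (fun i j => by simp)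
  have h4 := hlse.frobSq_le hθ ε c
  rw [← hD2] at h4 ⊢
  rw [← hZ2]
  have h5 : D ^ 2 ≤ 2 * (K * (Z * (2 * D + 2 * V))) + 2 * (K * (Z * V)) := by
    have h6 := h1.trans (mul_le_mul_of_nonneg_left (mul_le_mul_of_nonneg_left h3 hZ0) hK0)
    have h7 := (abs_le.1 h6).2
    have h8 := (abs_le.1 h2).1
    linarith
  have h6 : 2 * Z ≤ Z ^ 2 / t + t := by
    have : Z ^ 2 / t + t - 2 * Z = (Z - t) ^ 2 / t := by field_simp; ring
    have : 0 ≤ (Z - t) ^ 2 / t := by positivity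
    linarith
  have h7 : 6 * K * V * (2 * Z) ≤ 6 * K * V * (Z ^ 2 / t + t) :=
    mul_le_mul_of_nonneg_left h6 (by positivity)
  have h8 : (16 * K ^ 2 + 6 * K * V / t) * Z ^ 2 + 6 * K * V * t =
      16 * K ^ 2 * Z ^ 2 + 6 * K * V * (Z ^ 2 / t + t) := by ring
  rw [h8]
  nlinarith [sq_nonneg (D - 4 * K * Z)]

lemma Nat.size_le_three_mul_log {n : ℕ} (hn : 1 < n) : (n.size : ℝ) ≤ 3 * Real.log n := by
  have h0 : n.size ≠ 0 := by rw [Ne, Nat.size_eq_zero]; omega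
  have h1 : 2 ^ (n.size - 1) ≤ n := Nat.lt_size.1 (by omega)
  have h2 : ((n.size - 1 : ℕ) : ℝ) * Real.log 2 ≤ Real.log n := by
    rw [← Real.log_pow]
    exact Real.log_le_log (by positivity) (by exact_mod_cast h1)
  rw [Nat.cast_sub (by omega)] at h2
  have h3 : Real.log 2 ≤ Real.log n := Real.log_le_log (by norm_num) (by exact_mod_cast hn)
  have h4 := Real.log_two_gt_d9
  push_cast at h2
  nlinarith

lemma one_le_log_mul {n1 n2 : ℕ} (h1 : 1 < n1) (h2 : 1 < n2) :
    1 ≤ Real.log ((n1 : ℝ) * n2) := by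
  have hn1 : (2 : ℝ) ≤ n1 := by exact_mod_cast h1
  have hn2 : (2 : ℝ) ≤ n2 := by exact_mod_cast h2
  rw [Real.log_mul (by positivity) (by positivity)]
  have := Real.log_le_log (by norm_num) hn1
  have := Real.log_le_log (by norm_num) hn2
  linarith [Real.log_two_gt_d9]

lemma logFactor_le {n1 n2 : ℕ} (h1 : 1 < n1) (h2 : 1 < n2) :
    logFactor n1 n2 ≤ 117 * Real.log ((n1 : ℝ) * n2) ^ 3 := by
  have hn1 : (1 : ℝ) ≤ n1 := by exact_mod_cast h1.le
  have hn2 : (1 : ℝ) ≤ n2 := by exact_mod_cast h2.le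
  have hl := one_le_log_mul h1 h2
  have hadd := Real.log_mul (x := n1) (y := n2) (by positivity) (by positivity)
  have hs1 := Nat.size_le_three_mul_log h1
  have hs2 := Nat.size_le_three_mul_log h2
  have hl1 := Real.log_nonneg hn1
  have hl2 := Real.log_nonneg hn2
  set l := Real.log ((n1 : ℝ) * n2)
  calc logFactor n1 n2 ≤ (3 * l) * (3 * l) * (13 * l) := by
        unfold logFactor
        gcongr <;> linarith
    _ = 117 * l ^ 3 := by ring

lemma log_rectCount_le {n1 n2 : ℕ} (h1 : 1 < n1) (h2 : 1 < n2) :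
    Real.log (rectCount n1 n2) ≤ 4 * Real.log ((n1 : ℝ) * n2) := by
  have hn1 : (2 : ℝ) ≤ n1 := by exact_mod_cast h1
  have hn2 : (2 : ℝ) ≤ n2 := by exact_mod_cast h2
  have hpow : 4 * Real.log ((n1 : ℝ) * n2) = Real.log (((n1 : ℝ) * n2) ^ 4) := by
    rw [Real.log_pow]; norm_num
  rw [hpow]
  refine Real.log_le_log (by linarith [one_le_rectCount n1 n2]) ?_
  calc rectCount n1 n2 ≤ ((n1 : ℝ) ^ 2) ^ 2 * ((n2 : ℝ) ^ 2) ^ 2 := by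
        unfold rectCount
        gcongr <;> nlinarith
    _ = ((n1 : ℝ) * n2) ^ 4 := by ring

lemma IsLSE.integral_frobSq_le {n1 n2 : ℕ} (h1 : 1 < n1) (h2 : 1 < n2)
    {lse : (Fin n1 → Fin n2 → ℝ) → Fin n1 → Fin n2 → ℝ} (hlse : IsLSE lse)
    {θ : Fin n1 → Fin n2 → ℝ} (hθ : Isotonic θ) {σ : ℝ} (hσ : 0 < σ) (c : ℝ) :
    ∫ ε, frobSq (lse (θ + ε) - θ) ∂noiseMeasure n1 n2 σ ≤
      16 * 1170 ^ 2 * (σ ^ 2 * Real.log ((n1 : ℝ) * n2) ^ 8 +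
        σ * √(frobSq fun i j => θ i j - c) * Real.log ((n1 : ℝ) * n2) ^ 4) := by
  have hl := one_le_log_mul h1 h2
  have hF := logFactor_le h1 h2
  have hR := log_rectCount_le h1 h2
  set l := Real.log ((n1 : ℝ) * n2)
  have ht : 0 < 5 * σ * l := by positivity
  obtain ⟨hMi, hMle⟩ := integrable_noiseMax n1 n2 σ
  have hbound := integral_mono_of_nonneg (Filter.Eventually.of_forall fun _ => frobSq_nonneg _)
    ((hMi.const_mul _).add (integrable_const _))
    (Filter.Eventually.of_forall fun ε => hlse.frobSq_le_noiseMax hθ hσ c ht ε)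
  rw [integral_add' (hMi.const_mul _) (integrable_const _), integral_const_mul,
    integral_const, probReal_univ, one_smul] at hbound
  refine hbound.trans ?_
  set K := 2 * logFactor n1 n2
  set V := √(frobSq fun i j => θ i j - c)
  have hK0 : 0 ≤ K := mul_nonneg (by norm_num) (logFactor_nonneg _ _)
  have hV0 : 0 ≤ V := Real.sqrt_nonneg _
  have hM : ∫ ε, noiseMax σ ε ∂noiseMeasure n1 n2 σ ≤ (5 * σ * l) ^ 2 := by
    refine hMle.trans ?_
    calc 4 * σ ^ 2 * (Real.log (rectCount n1 n2) + 2) ≤ 4 * σ ^ 2 * (6 * l ^ 2) := by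
          gcongr
          nlinarith
      _ ≤ (5 * σ * l) ^ 2 := by nlinarith [mul_pos hσ (zero_lt_one.trans_le hl)]
  have hKt : K * (5 * σ * l) ≤ 1170 * σ * l ^ 4 := by
    have hK : K ≤ 2 * (117 * l ^ 3) := mul_le_mul_of_nonneg_left hF (by norm_num)
    calc K * (5 * σ * l) ≤ (2 * (117 * l ^ 3)) * (5 * σ * l) := by gcongr
      _ = 1170 * σ * l ^ 4 := by ring
  calc _ ≤ (16 * K ^ 2 + 6 * K * V / (5 * σ * l)) * (5 * σ * l) ^ 2 +
        6 * K * V * (5 * σ * l) := by gcongr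
    _ = 16 * (K * (5 * σ * l)) ^ 2 + 12 * V * (K * (5 * σ * l)) := by field_simp; ring
    _ ≤ 16 * (1170 * σ * l ^ 4) ^ 2 + 12 * V * (1170 * σ * l ^ 4) := by gcongr
    _ ≤ _ := by
        have : 0 ≤ σ * V * l ^ 4 := by positivity
        nlinarith

/-- **Theorem 1 (worst case risk bound).** There is a universal constant `C > 0` such
that for all `n1, n2 > 1`, all `σ > 0` and every isotonic `θ*`, the least squares
estimator satisfies
`R(θ*, θ̂) ≤ C (σ² (log n)⁸ / n + sqrt(σ² V(θ*) / n) (log n)⁴)` with `n = n1 n2`. -/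
theorem isotonic_lse_worst_case_risk :
    ∃ C : ℝ, 0 < C ∧
      ∀ (n1 n2 : ℕ), 1 < n1 → 1 < n2 → ∀ σ : ℝ, 0 < σ →
        ∀ θstar : Fin n1 → Fin n2 → ℝ, Isotonic θstar →
          ∀ lse, IsLSE lse →
            risk σ θstar lse ≤
              C * (σ ^ 2 * Real.log (n1 * n2) ^ 8 / (n1 * n2) +
                Real.sqrt (σ ^ 2 * matVar θstar / (n1 * n2)) * Real.log (n1 * n2) ^ 4) := by
  refine ⟨16 * 1170 ^ 2, by norm_num, fun n1 n2 h1 h2 σ hσ θstar hθ lse hlse => ?_⟩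
  have hn1 : (0 : ℝ) < n1 := by exact_mod_cast zero_lt_one.trans h1
  have hn2 : (0 : ℝ) < n2 := by exact_mod_cast zero_lt_one.trans h2
  have hn : (0 : ℝ) < n1 * n2 := mul_pos hn1 hn2
  have h := hlse.integral_frobSq_le h1 h2 hθ hσ ((∑ i, ∑ j, θstar i j) / (n1 * n2))
  set F := frobSq fun i j => θstar i j - (∑ i, ∑ j, θstar i j) / (n1 * n2)
  have hvar : matVar θstar = F / (n1 * n2) := rfl
  have hsqrt : √(σ ^ 2 * matVar θstar / (n1 * n2)) = σ * √F / (n1 * n2) := by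
    rw [hvar, show σ ^ 2 * (F / (n1 * n2)) / ((n1 : ℝ) * n2) = (σ / (n1 * n2)) ^ 2 * F by
      field_simp, Real.sqrt_mul (sq_nonneg _), Real.sqrt_sq (by positivity)]
    ring
  rw [hsqrt, risk, div_le_iff₀ hn]
  refine h.trans_eq ?_
  field_simp
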